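/- Let M ≥ 1, N ≥ 1, let A be a real N×N matrix with ν = ‖A‖ > 0, let h > 0 satisfy hν ≤ 1/2, and let T = (M−1)h. Let Ã_b = I_{MN} − S ⊗ I_N − h·(E ⊗ A) be the backward-Euler block matrix. If ‖(I_N − h·A)⁻¹‖ > 1, then the condition number of Ã_b satisfies κ(Ã_b) = ‖Ã_b‖·‖Ã_b⁻¹‖ ≤ 5·e^{2νT}/(hν). -/

import Mathlib

open Matrix
open scoped Kronecker

/-- The ℓ²→ℓ² operator (spectral) norm of a matrix. -/
noncomputable def specNorm {𝕜 : Type*} [RCLike 𝕜] {n : Type*} [Fintype n] [DecidableEq n]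
    (A : Matrix n n 𝕜) : ℝ :=
  ‖LinearMap.toContinuousLinearMap (Matrix.toEuclideanLin A)‖

/-- The M×M subdiagonal shift matrix: entry (i,j) is 1 if i = j+1 and 0 otherwise. -/
def shiftMatrix (M : ℕ) : Matrix (Fin M) (Fin M) ℝ :=
  Matrix.of fun i j => if (i : ℕ) = (j : ℕ) + 1 then 1 else 0

/-- The M×M diagonal matrix with first diagonal entry 0 and all other diagonal entries 1. -/
def ediagMatrix (M : ℕ) : Matrix (Fin M) (Fin M) ℝ :=
  Matrix.of fun i j => if i = j ∧ (i : ℕ) ≠ 0 then 1 else 0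

/-!
Each block row of `Ã_b` after the first reads `(1 - hA) xₖ - xₖ₋₁`, so pulling out the block
diagonal `D = 1 - h (E ⊗ A)` leaves `Ã_b = D (1 - S ⊗ R)` with `R = (1 - hA)⁻¹`. Put
`t = hν ≤ 1/2`. A Neumann series bounds both `‖D⁻¹‖` and `‖R‖` by `b = 1 + 2t`, and since `S ⊗ R`
is nilpotent, `‖(1 - S ⊗ R)⁻¹‖ ≤ 1 + b + ⋯ + b ^ (M - 1) ≤ b ^ M / (2t)`. As `b ≤ 2`, this gives
`‖Ã_b⁻¹‖ ≤ b ^ (M + 1) / (2t) ≤ 2 b ^ (M - 1) / t ≤ 2 exp (2νT) / t`, while `‖Ã_b‖ ≤ 2 + t ≤ 5/2`.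
-/

section NormedRing

variable {R : Type*} [NormedRing R] [NormOneClass R]

lemma norm_ringInverse_one_sub_le [HasSummableGeomSeries R] {x : R} (hx : ‖x‖ < 1) :
    ‖Ring.inverse (1 - x)‖ ≤ (1 - ‖x‖)⁻¹ := by
  rw [NormedRing.inverse_one_sub x hx]
  exact tsum_of_norm_bounded (hasSum_geometric_of_lt_one (norm_nonneg x) hx) (norm_pow_le x)

lemma norm_ringInverse_one_sub_le_geom_sum {x : R} {k : ℕ} (hx : x ^ k = 0) :
    ‖Ring.inverse (1 - x)‖ ≤ ∑ i ∈ Finset.range k, ‖x‖ ^ i := by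
  have left_inv : (∑ i ∈ Finset.range k, x ^ i) * (1 - x) = 1 := by
    rw [geom_sum_mul_neg, hx, sub_zero]
  have right_inv : (1 - x) * ∑ i ∈ Finset.range k, x ^ i = 1 := by
    rw [mul_neg_geom_sum, hx, sub_zero]
  have inverse_eq : Ring.inverse (1 - x) = ∑ i ∈ Finset.range k, x ^ i :=
    Ring.inverse_unit ⟨1 - x, _, right_inv, left_inv⟩
  rw [inverse_eq]
  exact norm_sum_le_of_le _ fun i _ => norm_pow_le x i

end NormedRing

lemma inv_one_sub_le_one_add_two_mul {t : ℝ} (ht₀ : 0 ≤ t) (ht : t ≤ 1 / 2) :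
    (1 - t)⁻¹ ≤ 1 + 2 * t := by
  rw [inv_le_iff_one_le_mul₀ (by linarith)]
  nlinarith

lemma mul_geom_sum_one_add_two_mul_le {t : ℝ} (ht₀ : 0 < t) (ht : t ≤ 1 / 2) (k : ℕ) :
    (1 + 2 * t) * ∑ i ∈ Finset.range (k + 1), (1 + 2 * t) ^ i ≤
      2 * Real.exp (2 * t * k) / t := by
  have pow_le_exp : (1 + 2 * t) ^ k ≤ Real.exp (2 * t * k) := by
    rw [mul_comm _ (k : ℝ), Real.exp_nat_mul]
    gcongr
    linarith [Real.add_one_le_exp (2 * t)]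
  have sum_eq : ∑ i ∈ Finset.range (k + 1), (1 + 2 * t) ^ i =
      ((1 + 2 * t) ^ (k + 1) - 1) / (2 * t) := by
    rw [geom_sum_eq (by linarith), add_sub_cancel_left]
  calc (1 + 2 * t) * ∑ i ∈ Finset.range (k + 1), (1 + 2 * t) ^ i
      ≤ (1 + 2 * t) * ((1 + 2 * t) ^ (k + 1) / (2 * t)) := by
        rw [sum_eq]
        gcongr
        exact sub_le_self _ zero_le_one
    _ = (1 + 2 * t) ^ 2 * (1 + 2 * t) ^ k / (2 * t) := by ring
    _ ≤ 2 ^ 2 * Real.exp (2 * t * k) / (2 * t) := by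
        gcongr
        linarith
    _ = 2 * Real.exp (2 * t * k) / t := by ring

open scoped Matrix.Norms.L2Operator

section L2Operator

variable {𝕜 : Type*} [RCLike 𝕜]
variable {l m n p : Type*} [Fintype l] [Fintype m] [Fintype n] [Fintype p]

lemma specNorm_eq_l2_opNorm [DecidableEq n] (A : Matrix n n 𝕜) : specNorm A = ‖A‖ := by
  rw [Matrix.l2_opNorm_def]
  rfl

lemma sum_norm_sq_mulVec_le [DecidableEq n] (A : Matrix m n 𝕜) (v : n → 𝕜) :
    ∑ i, ‖(A *ᵥ v) i‖ ^ 2 ≤ ‖A‖ ^ 2 * ∑ j, ‖v j‖ ^ 2 := by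
  have norm_le := pow_le_pow_left₀ (norm_nonneg _)
    (Matrix.l2_opNorm_mulVec A (WithLp.toLp 2 v)) 2
  rwa [mul_pow, EuclideanSpace.norm_sq_eq, EuclideanSpace.norm_sq_eq] at norm_le

lemma l2_opNorm_le_of_sum_norm_sq_mulVec_le [DecidableEq n] {A : Matrix m n 𝕜} {c : ℝ}
    (hc : 0 ≤ c) (h : ∀ v : n → 𝕜, ∑ i, ‖(A *ᵥ v) i‖ ^ 2 ≤ c ^ 2 * ∑ j, ‖v j‖ ^ 2) :
    ‖A‖ ≤ c := by
  rw [Matrix.l2_opNorm_def]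
  refine ContinuousLinearMap.opNorm_le_bound _ hc fun x => ?_
  refine le_of_sq_le_sq ?_ (by positivity)
  rw [mul_pow, EuclideanSpace.norm_sq_eq, EuclideanSpace.norm_sq_eq]
  exact h x

variable [DecidableEq m] [DecidableEq p]

lemma l2_opNorm_one_kronecker_le (B : Matrix n p 𝕜) :
    ‖(1 : Matrix m m 𝕜) ⊗ₖ B‖ ≤ ‖B‖ := by
  refine l2_opNorm_le_of_sum_norm_sq_mulVec_le (norm_nonneg B) fun v => ?_
  have block (i : m) (k : n) :
      (((1 : Matrix m m 𝕜) ⊗ₖ B) *ᵥ v) (i, k) = (B *ᵥ fun j => v (i, j)) k := by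
    simp [Matrix.mulVec, dotProduct, Fintype.sum_prod_type, Matrix.one_apply]
  simp only [Fintype.sum_prod_type, block, Finset.mul_sum _ _ (‖B‖ ^ 2)]
  exact Finset.sum_le_sum fun i _ => (sum_norm_sq_mulVec_le B _).trans_eq (Finset.mul_sum _ _ _)

lemma l2_opNorm_kronecker_one_le [DecidableEq n] (A : Matrix l m 𝕜) :
    ‖A ⊗ₖ (1 : Matrix n n 𝕜)‖ ≤ ‖A‖ := by
  refine l2_opNorm_le_of_sum_norm_sq_mulVec_le (norm_nonneg A) fun v => ?_
  have block (i : l) (k : n) :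
      ((A ⊗ₖ (1 : Matrix n n 𝕜)) *ᵥ v) (i, k) = (A *ᵥ fun j => v (j, k)) i := by
    simp [Matrix.mulVec, dotProduct, Fintype.sum_prod_type, Matrix.one_apply]
  simp only [Fintype.sum_prod_type_right, block, Finset.mul_sum _ _ (‖A‖ ^ 2)]
  exact Finset.sum_le_sum fun k _ => (sum_norm_sq_mulVec_le A _).trans_eq (Finset.mul_sum _ _ _)

lemma l2_opNorm_kronecker_le (A : Matrix l m 𝕜) (B : Matrix n p 𝕜) :
    ‖A ⊗ₖ B‖ ≤ ‖A‖ * ‖B‖ := by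
  classical
  calc ‖A ⊗ₖ B‖ = ‖(A ⊗ₖ (1 : Matrix n n 𝕜)) * ((1 : Matrix m m 𝕜) ⊗ₖ B)‖ := by
        rw [← Matrix.mul_kronecker_mul, Matrix.mul_one, Matrix.one_mul]
    _ ≤ ‖A ⊗ₖ (1 : Matrix n n 𝕜)‖ * ‖(1 : Matrix m m 𝕜) ⊗ₖ B‖ := Matrix.l2_opNorm_mul _ _
    _ ≤ ‖A‖ * ‖B‖ := by
        gcongr
        · exact l2_opNorm_kronecker_one_le A
        · exact l2_opNorm_one_kronecker_le B

variable [DecidableEq n]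

lemma isUnit_one_sub_of_l2_opNorm_lt_one {X : Matrix n n 𝕜} (hX : ‖X‖ < 1) : IsUnit (1 - X) :=
  have : CompleteSpace (Matrix n n 𝕜) := FiniteDimensional.complete 𝕜 _
  isUnit_one_sub_of_norm_lt_one hX

lemma l2_opNorm_inv_one_sub_le [Nonempty n] {X : Matrix n n 𝕜} {t : ℝ} (hX : ‖X‖ ≤ t)
    (ht : t ≤ 1 / 2) : ‖(1 - X)⁻¹‖ ≤ 1 + 2 * t := by
  have : CompleteSpace (Matrix n n 𝕜) := FiniteDimensional.complete 𝕜 _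
  calc ‖(1 - X)⁻¹‖ ≤ (1 - ‖X‖)⁻¹ := by
        rw [Matrix.nonsing_inv_eq_ringInverse]
        exact norm_ringInverse_one_sub_le (by linarith)
    _ ≤ (1 - t)⁻¹ := by
        gcongr
        linarith
    _ ≤ 1 + 2 * t := inv_one_sub_le_one_add_two_mul ((norm_nonneg X).trans hX) ht

end L2Operator

lemma kronecker_pow {R m n : Type*} [CommSemiring R] [Fintype m] [Fintype n] [DecidableEq m]
    [DecidableEq n] (A : Matrix m m R) (B : Matrix n n R) (k : ℕ) :
    (A ⊗ₖ B) ^ k = (A ^ k) ⊗ₖ (B ^ k) := by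
  induction k with
  | zero => simp
  | succ k ih => rw [pow_succ, ih, ← Matrix.mul_kronecker_mul, ← pow_succ, ← pow_succ]

section ShiftMatrix

variable (M : ℕ)

lemma ediagMatrix_eq_diagonal :
    ediagMatrix M = Matrix.diagonal fun i : Fin M => if (i : ℕ) ≠ 0 then 1 else 0 := by
  ext i j
  simp only [ediagMatrix, Matrix.of_apply, Matrix.diagonal_apply, ite_and]

lemma isStarProjection_ediagMatrix : IsStarProjection (ediagMatrix M) := by
  refine ⟨?_, ?_⟩
  · rw [IsIdempotentElem, ediagMatrix_eq_diagonal, Matrix.diagonal_mul_diagonal]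
    simp
  · rw [ediagMatrix_eq_diagonal]
    exact Matrix.isHermitian_diagonal _

lemma shiftMatrix_eq_ediagMatrix_mul_permMatrix :
    shiftMatrix M = ediagMatrix M * Equiv.Perm.permMatrix ℝ (finRotate M).symm := by
  ext i j
  have : NeZero M := i.neZero
  rw [ediagMatrix_eq_diagonal, Matrix.diagonal_mul]
  by_cases hi : i = 0
  · simp [shiftMatrix, hi]
  · have hi' : (i : ℕ) ≠ 0 := by simpa using hi
    have entry_iff : (finRotate M).symm i = j ↔ (i : ℕ) = j + 1 := by
      rw [Fin.ext_iff, coe_finRotate_symm_of_ne_zero hi]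
      omega
    rw [if_pos hi', one_mul, Equiv.Perm.permMatrix, PEquiv.toMatrix_toPEquiv_apply,
      Pi.single_apply]
    simp only [shiftMatrix, Matrix.of_apply, eq_comm (a := j), entry_iff]

lemma ediagMatrix_mul_shiftMatrix : ediagMatrix M * shiftMatrix M = shiftMatrix M := by
  rw [shiftMatrix_eq_ediagMatrix_mul_permMatrix, ← mul_assoc,
    (isStarProjection_ediagMatrix M).isIdempotentElem.eq]

lemma shiftMatrix_pow_eq_zero : shiftMatrix M ^ M = 0 := by
  have upper : (shiftMatrix M)ᵀ.IsUpperTriangular := fun i j hij => by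
    have : (j : ℕ) ≠ i + 1 := ne_of_lt (Nat.lt_succ_of_lt hij)
    simp [shiftMatrix, this]
  have charpoly_eq : (shiftMatrix M).charpoly = Polynomial.X ^ M := by
    rw [← Matrix.charpoly_transpose, Matrix.charpoly_of_isUpperTriangular _ upper]
    simp [shiftMatrix]
  simpa [charpoly_eq] using (shiftMatrix M).aeval_self_charpoly

lemma l2_opNorm_ediagMatrix_le_one : ‖ediagMatrix M‖ ≤ 1 :=
  IsStarProjection.norm_le _ (isStarProjection_ediagMatrix M)

lemma l2_opNorm_shiftMatrix_le_one : ‖shiftMatrix M‖ ≤ 1 := by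
  rw [shiftMatrix_eq_ediagMatrix_mul_permMatrix]
  exact (norm_mul_le _ _).trans <| mul_le_one₀ (l2_opNorm_ediagMatrix_le_one M)
    (norm_nonneg _) (Matrix.permMatrix_l2_opNorm_le _)

end ShiftMatrix

section BackwardEuler

variable {n : Type*} [Fintype n] [DecidableEq n]

/-- The block matrix `Ã_b` of `M - 1` backward Euler steps of size `h` for `x' = A x`: its first
block row encodes the initial condition and each later one an equation `(1 - h A) xₖ = xₖ₋₁`. -/
noncomputable def backwardEulerMatrix (M : ℕ) (h : ℝ) (A : Matrix n n ℝ) :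
    Matrix (Fin M × n) (Fin M × n) ℝ :=
  1 - shiftMatrix M ⊗ₖ (1 : Matrix n n ℝ) - h • (ediagMatrix M ⊗ₖ A)

variable (M : ℕ) {h t : ℝ} {A : Matrix n n ℝ}

lemma backwardEulerMatrix_eq_mul (hA : IsUnit (1 - h • A)) :
    backwardEulerMatrix M h A =
      (1 - h • (ediagMatrix M ⊗ₖ A)) * (1 - shiftMatrix M ⊗ₖ (1 - h • A)⁻¹) := by
  set R := (1 - h • A)⁻¹
  have R_eq : R = 1 + h • (A * R) := by
    rw [← sub_eq_iff_eq_add, ← Matrix.smul_mul, ← one_sub_mul]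
    exact Matrix.mul_nonsing_inv _ ((Matrix.isUnit_iff_isUnit_det _).1 hA)
  have shift_eq : (1 - h • (ediagMatrix M ⊗ₖ A)) * (shiftMatrix M ⊗ₖ R) =
      shiftMatrix M ⊗ₖ (1 : Matrix n n ℝ) := by
    rw [sub_mul, one_mul, Matrix.smul_mul, ← Matrix.mul_kronecker_mul,
      ediagMatrix_mul_shiftMatrix, sub_eq_iff_eq_add, ← Matrix.kronecker_smul,
      ← Matrix.kronecker_add, ← R_eq]
  rw [mul_sub, mul_one, shift_eq, backwardEulerMatrix, sub_right_comm]

lemma l2_opNorm_smul_ediagMatrix_kronecker_le (h : ℝ) (A : Matrix n n ℝ) :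
    ‖h • (ediagMatrix M ⊗ₖ A)‖ ≤ ‖h • A‖ := by
  rw [← Matrix.kronecker_smul]
  exact (l2_opNorm_kronecker_le _ _).trans
    (mul_le_of_le_one_left (norm_nonneg _) (l2_opNorm_ediagMatrix_le_one M))

lemma l2_opNorm_shiftMatrix_kronecker_le (B : Matrix n n ℝ) : ‖shiftMatrix M ⊗ₖ B‖ ≤ ‖B‖ :=
  (l2_opNorm_kronecker_le _ _).trans
    (mul_le_of_le_one_left (norm_nonneg _) (l2_opNorm_shiftMatrix_le_one M))

variable [Nonempty n] [NeZero M]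

lemma l2_opNorm_backwardEulerMatrix_le (h : ℝ) (A : Matrix n n ℝ) :
    ‖backwardEulerMatrix M h A‖ ≤ 2 + ‖h • A‖ :=
  calc ‖backwardEulerMatrix M h A‖
      ≤ ‖(1 : Matrix (Fin M × n) (Fin M × n) ℝ)‖ + ‖shiftMatrix M ⊗ₖ (1 : Matrix n n ℝ)‖
        + ‖h • (ediagMatrix M ⊗ₖ A)‖ :=
        norm_sub_le_of_le (norm_sub_le _ _) le_rfl
    _ ≤ 1 + 1 + ‖h • A‖ := by
        gcongr
        · exact norm_one.le
        · exact (l2_opNorm_shiftMatrix_kronecker_le M 1).trans norm_one.le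
        · exact l2_opNorm_smul_ediagMatrix_kronecker_le M h A
    _ = 2 + ‖h • A‖ := by norm_num

lemma l2_opNorm_inv_one_sub_shiftMatrix_kronecker_le (B : Matrix n n ℝ) :
    ‖(1 - shiftMatrix M ⊗ₖ B)⁻¹‖ ≤ ∑ i ∈ Finset.range M, ‖B‖ ^ i := by
  have nilpotent : (shiftMatrix M ⊗ₖ B) ^ M = 0 := by
    rw [kronecker_pow, shiftMatrix_pow_eq_zero, Matrix.zero_kronecker]
  rw [Matrix.nonsing_inv_eq_ringInverse]
  refine (norm_ringInverse_one_sub_le_geom_sum nilpotent).trans ?_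
  gcongr
  exact l2_opNorm_shiftMatrix_kronecker_le M B

lemma l2_opNorm_inv_backwardEulerMatrix_le (hA : ‖h • A‖ ≤ t) (ht : t ≤ 1 / 2) :
    ‖(backwardEulerMatrix M h A)⁻¹‖ ≤
      (1 + 2 * t) * ∑ i ∈ Finset.range M, (1 + 2 * t) ^ i := by
  have resolvent_le : ‖(1 - h • A)⁻¹‖ ≤ 1 + 2 * t := l2_opNorm_inv_one_sub_le hA ht
  have diagonal_inv_le : ‖(1 - h • (ediagMatrix M ⊗ₖ A))⁻¹‖ ≤ 1 + 2 * t :=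
    l2_opNorm_inv_one_sub_le ((l2_opNorm_smul_ediagMatrix_kronecker_le M h A).trans hA) ht
  rw [backwardEulerMatrix_eq_mul M (isUnit_one_sub_of_l2_opNorm_lt_one (by linarith)),
    Matrix.mul_inv_rev, mul_comm (1 + 2 * t)]
  calc ‖(1 - shiftMatrix M ⊗ₖ (1 - h • A)⁻¹)⁻¹ * (1 - h • (ediagMatrix M ⊗ₖ A))⁻¹‖
      ≤ ‖(1 - shiftMatrix M ⊗ₖ (1 - h • A)⁻¹)⁻¹‖ * ‖(1 - h • (ediagMatrix M ⊗ₖ A))⁻¹‖ :=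
        norm_mul_le _ _
    _ ≤ (∑ i ∈ Finset.range M, ‖(1 - h • A)⁻¹‖ ^ i) * (1 + 2 * t) := by
        gcongr
        exact l2_opNorm_inv_one_sub_shiftMatrix_kronecker_le M _
    _ ≤ (∑ i ∈ Finset.range M, (1 + 2 * t) ^ i) * (1 + 2 * t) := by
        gcongr
        exact (norm_nonneg _).trans resolvent_le

end BackwardEuler

theorem stmt17_general {M : ℕ} (hM : 1 ≤ M) {n : Type*} [Fintype n] [DecidableEq n] [Nonempty n]
    (A : Matrix n n ℝ) {ν : ℝ} (hA : specNorm A ≤ ν) (hν : 0 < ν)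
    {h : ℝ} (hh : 0 < h) (hhν : h * ν ≤ 1 / 2) :
    specNorm (backwardEulerMatrix M h A) * specNorm (backwardEulerMatrix M h A)⁻¹ ≤
      5 * Real.exp (2 * ν * (((M : ℝ) - 1) * h)) / (h * ν) := by
  obtain ⟨k, rfl⟩ := Nat.exists_eq_add_of_le' hM
  simp only [specNorm_eq_l2_opNorm] at hA ⊢
  have smul_le : ‖h • A‖ ≤ h * ν := by
    rw [norm_smul, Real.norm_of_nonneg hh.le]
    gcongr
  have norm_le : ‖backwardEulerMatrix (k + 1) h A‖ ≤ 5 / 2 := by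
    linarith [l2_opNorm_backwardEulerMatrix_le (k + 1) h A]
  have norm_inv_le : ‖(backwardEulerMatrix (k + 1) h A)⁻¹‖ ≤
      2 * Real.exp (2 * (h * ν) * k) / (h * ν) :=
    (l2_opNorm_inv_backwardEulerMatrix_le (k + 1) smul_le hhν).trans
      (mul_geom_sum_one_add_two_mul_le (mul_pos hh hν) hhν k)
  calc ‖backwardEulerMatrix (k + 1) h A‖ * ‖(backwardEulerMatrix (k + 1) h A)⁻¹‖
      ≤ 5 / 2 * (2 * Real.exp (2 * (h * ν) * k) / (h * ν)) := by gcongr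
    _ = 5 * Real.exp (2 * ν * (((k + 1 : ℕ) - 1) * h)) / (h * ν) := by
        push_cast
        ring_nf

theorem stmt17 {M N : ℕ} (hM : 1 ≤ M) (hN : 1 ≤ N)
    (A : Matrix (Fin N) (Fin N) ℝ) (ν : ℝ) (hν : ν = specNorm A) (hνpos : 0 < ν)
    (h : ℝ) (hh : 0 < h) (hhν : h * ν ≤ 1 / 2)
    (T : ℝ) (hT : T = ((M : ℝ) - 1) * h)
    (hBinv : specNorm ((1 : Matrix (Fin N) (Fin N) ℝ) - h • A)⁻¹ > 1) :
    specNorm ((1 : Matrix (Fin M × Fin N) (Fin M × Fin N) ℝ)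
        - shiftMatrix M ⊗ₖ (1 : Matrix (Fin N) (Fin N) ℝ)
        - h • (ediagMatrix M ⊗ₖ A)) *
      specNorm ((1 : Matrix (Fin M × Fin N) (Fin M × Fin N) ℝ)
        - shiftMatrix M ⊗ₖ (1 : Matrix (Fin N) (Fin N) ℝ)
        - h • (ediagMatrix M ⊗ₖ A))⁻¹
      ≤ 5 * Real.exp (2 * ν * T) / (h * ν) := by
  have : Nonempty (Fin N) := ⟨⟨0, hN⟩⟩
  exact hT ▸ stmt17_general hM A hν.ge hνpos hh hhν
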